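/- Let U be an open connected subset of ℝⁿ and let f, g : U → ℝⁿ be differentiable maps, i.e. at every x ∈ U there are continuous linear maps f′(x), g′(x) : ℝⁿ → ℝⁿ with HasFDerivAt f (f′(x)) x and HasFDerivAt g (g′(x)) x. Suppose there exist α ∈ ℝ and points x₀, x₁ ∈ U such that det(f′(x₀) − α·g′(x₀)) < 0 and det(f′(x₁) − α·g′(x₁)) > 0. Then there exists x₂ ∈ U such that det(f′(x₂) − α·g′(x₂)) = 0. -/

import Mathlib

/-!
Put `h = f - α • g` and suppose `det h'` vanishes nowhere on `U`.

If `u` is `C¹` and supported in a compact set `K`, then `x ↦ x + s • u x` is a diffeomorphism of `K`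
for small `s`, so `∫_K det (1 + s • u') * φ (x + s • u x) = ∫_K φ`. For polynomial `φ` the left-hand
side is a polynomial in `s`, so the identity persists at `s = 1`, and Stone–Weierstrass extends it
to continuous `φ`. Concentrating `φ` at `z` gives a solution of `x + u x = z` with
`det (1 + u' x) ≥ 0`. A map that is merely continuous, equal to the identity off a compact set and
differentiable with invertible derivative on the fibre over `z`, is approximated by a `C¹` map with
an error at most half the distance to `z`; this forces equal fibres over `z` and equal signs of the
determinants there. Hence some point of the fibre has positive determinant. Applied to `h`
renormalised by `h' x` on small balls near `x`, this shows that a ball with `x` on its boundary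
contains points where `det h'` has the same sign as at `x`.

Suppose now that `det h'` takes both signs, and let `S` be the frontier of `{x | 0 < det (h' x)}`.
As `det h'` is a pointwise limit of continuous functions (determinants of difference quotients), by
Baire it has constant sign on `S` near some `p ∈ S`. Take `w` close to `p` with `det (h' w)` of the
opposite sign and a nearest point `x ∈ S` to `w`. On the open ball about `w` through `x` the sign is
that of `det (h' w)`, contradicting the previous paragraph at `x`.
-/

open Filter Metric MeasureTheory Polynomial Set Topology
open scoped NNReal

section PolynomialFamilies

/-- The functions `F s x` on `ℝ × X` that are polynomial in the parameter `s` with coefficients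
continuous in `x`: the image of `C(X, ℝ)[s]`. Integrating over a compact set of `x` leaves a real
polynomial in `s`. -/
noncomputable def polynomialFamilies (X : Type*) [TopologicalSpace X] :
    Subalgebra ℝ (ℝ → X → ℝ) :=
  (eval₂AlgHom ((Pi.constAlgHom ℝ ℝ (X → ℝ)).comp (ContinuousMap.coeFnAlgHom ℝ))
    (fun s _ ↦ s) fun _ ↦ Commute.all _ _).range

variable {Y : Type*} [TopologicalSpace Y]

theorem mem_polynomialFamilies_iff {F : ℝ → Y → ℝ} :
    F ∈ polynomialFamilies Y ↔
      ∃ P : C(Y, ℝ)[X], ∀ s y, ∑ k ∈ P.support, P.coeff k y * s ^ k = F s y := by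
  have heval (P : C(Y, ℝ)[X]) (s : ℝ) (y : Y) :
      eval₂AlgHom ((Pi.constAlgHom ℝ ℝ (Y → ℝ)).comp (ContinuousMap.coeFnAlgHom ℝ))
        (fun s _ ↦ s) (fun _ ↦ Commute.all _ _) P s y = ∑ k ∈ P.support, P.coeff k y * s ^ k := by
    change eval₂ (S := ℝ → Y → ℝ) _ (fun s _ ↦ s) P s y = _
    simp [eval₂_eq_sum, Polynomial.sum]
  simp only [polynomialFamilies, AlgHom.mem_range, funext_iff, heval]

theorem const_mem_polynomialFamilies {c : Y → ℝ} (hc : Continuous c) :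
    (fun _ ↦ c) ∈ polynomialFamilies Y :=
  (AlgHom.mem_range _).2 ⟨C ⟨c, hc⟩, eval₂_C _ _⟩

theorem param_mem_polynomialFamilies : (fun s _ ↦ s) ∈ polynomialFamilies Y :=
  (AlgHom.mem_range _).2 ⟨X, eval₂_X _ _⟩

theorem affine_mem_polynomialFamilies {a b : Y → ℝ} (ha : Continuous a) (hb : Continuous b) :
    (fun s y ↦ a y + s * b y) ∈ polynomialFamilies Y :=
  add_mem (const_mem_polynomialFamilies ha)
    (mul_mem param_mem_polynomialFamilies (const_mem_polynomialFamilies hb))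

theorem det_mem_polynomialFamilies {ι : Type*} [Fintype ι] [DecidableEq ι]
    {M : ℝ → Y → Matrix ι ι ℝ} (hM : ∀ i j, (fun s y ↦ M s y i j) ∈ polynomialFamilies Y) :
    (fun s y ↦ (M s y).det) ∈ polynomialFamilies Y := by
  have hdet : (fun s y ↦ (M s y).det) =
      ∑ σ : Equiv.Perm ι, Equiv.Perm.sign σ • ∏ i, fun s y ↦ M s y (σ i) i := by
    ext s y
    simp [Matrix.det_apply, Finset.sum_apply, Finset.prod_apply, Units.smul_def]
  rw [hdet]
  exact sum_mem fun σ _ ↦ zsmul_mem (prod_mem fun i _ ↦ hM _ _) _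

theorem det_one_add_smul_mem_polynomialFamilies {E : Type*} [NormedAddCommGroup E] [NormedSpace ℝ E]
    [FiniteDimensional ℝ E] {A : Y → E →L[ℝ] E} (hA : Continuous A) :
    (fun s y ↦ (1 + s • A y).det) ∈ polynomialFamilies Y := by
  let b := Module.finBasis ℝ E
  have hdet (s : ℝ) (y : Y) : (1 + s • A y).det =
      (Matrix.of fun i j ↦ b.coord i (b j) + s * b.coord i (A y (b j))).det := by
    rw [ContinuousLinearMap.det, ← LinearMap.det_toMatrix b]
    congr 1
    ext i j
    simp [LinearMap.toMatrix_apply]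
  simp only [hdet]
  refine det_mem_polynomialFamilies fun i j ↦ affine_mem_polynomialFamilies continuous_const ?_
  exact (b.coord i).continuous_of_finiteDimensional.comp (by fun_prop)

theorem exists_polynomial_eval_eq_setIntegral [T2Space Y] [MeasurableSpace Y]
    [OpensMeasurableSpace Y] (μ : Measure Y) [IsFiniteMeasureOnCompacts μ] {F : ℝ → Y → ℝ}
    (hF : F ∈ polynomialFamilies Y) {K : Set Y} (hK : IsCompact K) :
    ∃ p : ℝ[X], ∀ s, p.eval s = ∫ y in K, F s y ∂μ := by
  obtain ⟨P, hP⟩ := mem_polynomialFamilies_iff.1 hF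
  refine ⟨∑ k ∈ P.support, monomial k (∫ y in K, P.coeff k y ∂μ), fun s ↦ ?_⟩
  simp only [← hP, eval_finsetSum, eval_monomial]
  rw [integral_finsetSum _ fun k _ ↦ (by fun_prop : Continuous fun y ↦
    P.coeff k y * s ^ k).continuousOn.integrableOn_compact hK]
  simp only [integral_mul_const]

end PolynomialFamilies

section Degree

theorem image_eq_self_of_bijective_of_eqOn_compl {X : Type*} {F : X → X} {K : Set X}
    (hF : F.Bijective) (hFK : EqOn F id Kᶜ) : F '' K = K := by
  rw [← compl_inj_iff, ← image_compl_eq hF, hFK.image_eq, image_id]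

variable {E : Type*} [NormedAddCommGroup E] [NormedSpace ℝ E]

theorem bijective_add_of_lipschitzWith [CompleteSpace E] {u : E → E} {c : ℝ≥0}
    (hu : LipschitzWith c u) (hc : c < 1) : Function.Bijective fun x ↦ x + u x := by
  have happrox : ApproximatesLinearOn (fun x ↦ x + u x)
      (ContinuousLinearEquiv.refl ℝ E : E →L[ℝ] E) univ c := fun x _ y _ ↦ by
    simpa [add_sub_add_comm, dist_eq_norm] using hu.dist_le_mul x y
  have hc' : Subsingleton E ∨ c < ‖((ContinuousLinearEquiv.refl ℝ E).symm : E →L[ℝ] E)‖₊⁻¹ := by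
    rcases subsingleton_or_nontrivial E with hE | hE
    · exact .inl hE
    · exact .inr (by simpa using hc)
  exact ⟨injOn_univ.1 (happrox.injOn hc'), happrox.surjective hc'⟩

theorem eventually_forall_det_one_add_smul_pos (C : ℝ) :
    ∀ᶠ s : ℝ in 𝓝 0, ∀ A : E →L[ℝ] E, ‖A‖ ≤ C → 0 < (1 + s • A).det := by
  have hdet : ∀ᶠ A : E →L[ℝ] E in 𝓝 1, 0 < A.det :=
    ContinuousLinearMap.continuous_det.continuousAt.eventually_const_lt
      (by simp [ContinuousLinearMap.det])
  obtain ⟨ε, hε, hpos⟩ := Metric.eventually_nhds_iff.1 hdet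
  have hsC : Tendsto (fun s : ℝ ↦ ‖s‖ * C) (𝓝 0) (𝓝 0) := by
    simpa using (tendsto_norm_zero (E := ℝ)).mul_const C
  filter_upwards [hsC.eventually_lt_const hε] with s hs A hA
  refine hpos ?_
  calc dist (1 + s • A) 1 = ‖s‖ * ‖A‖ := by
        rw [dist_eq_norm, add_sub_cancel_left, norm_smul]
    _ ≤ ‖s‖ * C := by gcongr
    _ < ε := hs

/-- The continuous functions `φ` for which `s ↦ φ (x + s • u x)` is polynomial in `s`, with
coefficients continuous in `x`: a subalgebra to which Stone–Weierstrass applies. -/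
noncomputable def polynomialAlong {u : E → E} (hu : Continuous u) : Subalgebra ℝ C(E, ℝ) :=
  (polynomialFamilies E).comap <| AlgHom.pi fun s : ℝ ↦ (ContinuousMap.coeFnAlgHom ℝ).comp
    (ContinuousMap.compRightAlgHom ℝ ℝ ⟨fun x ↦ x + s • u x, by fun_prop⟩)

theorem separatesPoints_polynomialAlong {u : E → E} (hu : Continuous u) :
    (polynomialAlong hu).SeparatesPoints := by
  intro x y hxy
  obtain ⟨l, hl⟩ := SeparatingDual.exists_separating_of_ne (R := ℝ) hxy
  refine ⟨l, ⟨(l : C(E, ℝ)), ?_, rfl⟩, hl⟩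
  have haffine : (fun s x ↦ l (x + s • u x)) = fun s x ↦ l x + s * l (u x) := by
    ext s x
    simp
  change (fun s x ↦ l (x + s • u x)) ∈ polynomialFamilies E
  rw [haffine]
  exact affine_mem_polynomialFamilies l.continuous (by fun_prop)

theorem continuous_det_one_add_fderiv {u : E → E} (hu : ContDiff ℝ 1 u) :
    Continuous fun x ↦ (1 + fderiv ℝ u x).det :=
  ContinuousLinearMap.continuous_det.comp (continuous_const.add (hu.continuous_fderiv one_ne_zero))

variable [FiniteDimensional ℝ E] {u : E → E} {K : Set E}

section Integral

variable [MeasurableSpace E] [BorelSpace E] (μ : Measure E) [μ.IsAddHaarMeasure]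

theorem eventually_setIntegral_det_mul_comp_eq (hu : ContDiff ℝ 1 u) (hK : IsCompact K)
    (huK : ∀ x ∉ K, u x = 0) :
    ∀ᶠ s : ℝ in 𝓝 0, ∀ φ : E → ℝ,
      ∫ x in K, (1 + s • fderiv ℝ u x).det * φ (x + s • u x) ∂μ
        = ∫ x in K, φ x ∂μ := by
  have : CompleteSpace E := FiniteDimensional.complete ℝ E
  obtain ⟨C, hC⟩ := hu.lipschitzWith_of_hasCompactSupport
    (HasCompactSupport.intro hK huK) one_ne_zero
  have hcontract : ∀ᶠ s : ℝ in 𝓝 0, ‖s‖₊ * C < 1 :=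
    (by fun_prop : Continuous fun s : ℝ ↦ ‖s‖₊ * C).continuousAt.eventually_lt_const (by simp)
  filter_upwards [hcontract, eventually_forall_det_one_add_smul_pos (E := E) C] with s hs hpos φ
  have hbij : Function.Bijective fun x ↦ x + s • u x :=
    bijective_add_of_lipschitzWith ((lipschitzWith_smul s).comp hC) hs
  have himage : (fun x ↦ x + s • u x) '' K = K :=
    image_eq_self_of_bijective_of_eqOn_compl hbij fun x hx ↦ by simp [huK x hx]
  have hderiv (x : E) : HasFDerivAt (fun x ↦ x + s • u x) (1 + s • fderiv ℝ u x) x :=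
    (hasFDerivAt_id x).add ((hu.differentiable one_ne_zero x).hasFDerivAt.const_smul s)
  have hchange := integral_image_eq_integral_abs_det_fderiv_smul μ hK.measurableSet
    (fun x _ ↦ (hderiv x).hasFDerivWithinAt) hbij.injective.injOn φ
  simpa only [himage, smul_eq_mul,
    abs_of_pos (hpos _ (norm_fderiv_le_of_lipschitz ℝ hC))] using hchange.symm

theorem setIntegral_det_mul_comp_eq_of_mem_polynomialAlong (hu : ContDiff ℝ 1 u)
    (hK : IsCompact K) (huK : ∀ x ∉ K, u x = 0) {φ : C(E, ℝ)}
    (hφ : φ ∈ polynomialAlong hu.continuous) :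
    ∫ x in K, (1 + fderiv ℝ u x).det * φ (x + u x) ∂μ = ∫ x in K, φ x ∂μ := by
  obtain ⟨p, hp⟩ := exists_polynomial_eval_eq_setIntegral μ
    (mul_mem (det_one_add_smul_mem_polynomialFamilies (hu.continuous_fderiv one_ne_zero)) hφ) hK
  have hconst : p = C (∫ x in K, φ x ∂μ) := by
    refine eq_of_infinite_eval_eq _ _ (infinite_of_mem_nhds 0 ?_)
    filter_upwards [eventually_setIntegral_det_mul_comp_eq μ hu hK huK] with s hs
    exact (hp s).trans ((hs φ).trans eval_C.symm)
  simpa [hconst] using (hp 1).symm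

theorem norm_setIntegral_mul_comp_sub_le {Y : Type*} [MeasurableSpace Y] {ν : Measure Y}
    {K : Set Y} (hK : ν K < ⊤) {w θ : Y → ℝ} {F : Y → Y} {M ε : ℝ} (hw : ∀ y ∈ K, ‖w y‖ ≤ M)
    (hθ : ∀ y ∈ K ∪ F '' K, ‖θ y‖ ≤ ε) :
    ‖(∫ y in K, w y * θ (F y) ∂ν) - ∫ y in K, θ y ∂ν‖ ≤ ε * ((M + 1) * ν.real K) := by
  have hcomp : ‖∫ y in K, w y * θ (F y) ∂ν‖ ≤ M * ε * ν.real K :=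
    norm_setIntegral_le_of_norm_le_const hK fun y hy ↦ by
      rw [norm_mul]
      exact mul_le_mul (hw y hy) (hθ _ (.inr (mem_image_of_mem F hy))) (norm_nonneg _)
        ((norm_nonneg _).trans (hw y hy))
  have hself : ‖∫ y in K, θ y ∂ν‖ ≤ ε * ν.real K :=
    norm_setIntegral_le_of_norm_le_const hK fun y hy ↦ hθ y (.inl hy)
  linarith [norm_sub_le (∫ y in K, w y * θ (F y) ∂ν) (∫ y in K, θ y ∂ν)]

theorem setIntegral_det_mul_comp_eq (hu : ContDiff ℝ 1 u)
    (hK : IsCompact K) (huK : ∀ x ∉ K, u x = 0) {φ : E → ℝ} (hφ : Continuous φ) :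
    ∫ x in K, (1 + fderiv ℝ u x).det * φ (x + u x) ∂μ = ∫ x in K, φ x ∂μ := by
  have hu_cont : Continuous u := hu.continuous
  have hdet_cont := continuous_det_one_add_fderiv hu
  have hint {ψ : E → ℝ} (hψ : Continuous ψ) : IntegrableOn ψ K μ :=
    hψ.continuousOn.integrableOn_compact hK
  obtain ⟨M, hM⟩ := hK.exists_bound_of_continuousOn hdet_cont.continuousOn
  have hclose {ε : ℝ} (hε : 0 < ε) :
      ‖(∫ x in K, (1 + fderiv ℝ u x).det * φ (x + u x) ∂μ) - ∫ x in K, φ x ∂μ‖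
        ≤ ε * ((M + 1) * μ.real K) := by
    obtain ⟨ψ, hψ, hψφ⟩ :=
      ContinuousMap.exists_mem_subalgebra_near_continuous_of_isCompact_of_separatesPoints
        (separatesPoints_polynomialAlong hu.continuous) ⟨φ, hφ⟩
        (hK.union (hK.image (by fun_prop : Continuous fun x ↦ x + u x))) hε
    have hψ_eq := setIntegral_det_mul_comp_eq_of_mem_polynomialAlong μ hu hK huK hψ
    have hbound := norm_setIntegral_mul_comp_sub_le (ν := μ) (θ := fun x ↦ ψ x - φ x)
      (F := fun x ↦ x + u x) hK.measure_lt_top hM fun x hx ↦ (hψφ x hx).le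
    simp only [mul_sub] at hbound
    rwa [integral_sub (hint (by fun_prop)) (hint (by fun_prop)),
      integral_sub (hint (by fun_prop)) (hint (by fun_prop)), hψ_eq, sub_sub_sub_cancel_left,
      norm_sub_rev] at hbound
  have hlim : Tendsto (fun ε ↦ ε * ((M + 1) * μ.real K)) (𝓝[>] 0) (𝓝 0) :=
    tendsto_nhdsWithin_of_tendsto_nhds (Continuous.tendsto' (by fun_prop) _ _ (zero_mul _))
  exact sub_eq_zero.1 (norm_le_zero_iff.1 (ge_of_tendsto hlim
    (eventually_mem_nhdsWithin.mono fun ε hε ↦ hclose hε)))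

end Integral

theorem exists_add_eq_and_det_nonneg (hu : ContDiff ℝ 1 u) (hu_supp : HasCompactSupport u)
    (z : E) : ∃ x, x + u x = z ∧ 0 ≤ (1 + fderiv ℝ u x).det := by
  borelize E
  let μ : Measure E := Measure.addHaar
  by_contra! hneg
  have hu_cont : Continuous u := hu.continuous
  have hdet_cont := continuous_det_one_add_fderiv hu
  obtain ⟨K, hK, huK, hzK⟩ : ∃ K, IsCompact K ∧ (∀ x ∉ K, u x = 0) ∧ closedBall z 1 ⊆ K :=
    ⟨tsupport u ∪ closedBall z 1, hu_supp.isCompact.union (isCompact_closedBall z 1),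
      fun x hx ↦ image_eq_zero_of_notMem_tsupport fun h ↦ hx (.inl h), subset_union_right⟩
  obtain ⟨δ, hδ, hδ_le⟩ : ∃ δ > 0, ∀ x ∈ K ∩ {x | 0 ≤ (1 + fderiv ℝ u x).det},
      δ ≤ dist (x + u x) z :=
    (hK.inter_right (isClosed_le continuous_const hdet_cont)).exists_forall_le' (by fun_prop)
      fun x hx ↦ dist_pos.2 fun h ↦ (hneg x h).not_ge hx.2
  let φ : E → ℝ := fun y ↦ max 0 (min δ 1 - dist y z)
  have hφ_cont : Continuous φ := by fun_prop
  have hφ_nonneg (y : E) : 0 ≤ φ y := le_max_left _ _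
  have hφ_far (y : E) (hy : min δ 1 ≤ dist y z) : φ y = 0 := max_eq_left (sub_nonpos.2 hy)
  have hφ_off (y : E) (hy : y ∉ closedBall z 1) : φ y = 0 :=
    hφ_far y ((min_le_right _ _).trans (not_le.1 hy).le)
  have hpos : 0 < ∫ x in K, φ x ∂μ := by
    rw [setIntegral_eq_integral_of_forall_compl_eq_zero fun y hy ↦ hφ_off y fun h ↦ hy (hzK h)]
    refine hφ_cont.integral_pos_of_hasCompactSupport_nonneg_nonzero
      (HasCompactSupport.intro (isCompact_closedBall z 1) hφ_off) hφ_nonneg (x := z) ?_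
    simp [φ, hδ]
  refine hpos.not_ge ?_
  rw [← setIntegral_det_mul_comp_eq μ hu hK huK hφ_cont]
  refine setIntegral_nonpos hK.measurableSet fun x hx ↦ ?_
  rcases lt_or_ge (1 + fderiv ℝ u x).det 0 with hdet | hdet
  · exact mul_nonpos_of_nonpos_of_nonneg hdet.le (hφ_nonneg _)
  · rw [hφ_far _ ((min_le_left _ _).trans (hδ_le x ⟨hx, hdet⟩)), mul_zero]

end Degree

section Approximation

variable {E F : Type*} [NormedAddCommGroup E] [NormedSpace ℝ E]
  [NormedAddCommGroup F] [NormedSpace ℝ F]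

theorem norm_sub_apply_le_of_eventually_norm_sub_le {f g : E → F} {f' g' : E →L[ℝ] F} {x : E}
    {κ : ℝ} (hf : HasFDerivAt f f' x) (hg : HasFDerivAt g g' x) (hfx : f x = 0)
    (hgf : ∀ᶠ y in 𝓝 x, ‖g y - f y‖ ≤ κ * ‖f y‖) (v : E) : ‖g' v - f' v‖ ≤ κ * ‖f' v‖ := by
  have hgx : g x = 0 := by simpa [hfx] using hgf.self_of_nhds
  have hray : Tendsto (fun c : ℝ ↦ x + c⁻¹ • v) atTop (𝓝 x) := by
    simpa using (tendsto_inv_atTop_zero (𝕜 := ℝ)).smul_const v |>.const_add x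
  refine le_of_tendsto_of_tendsto ((hg.lim_real v).sub (hf.lim_real v)).norm
    ((hf.lim_real v).norm.const_mul κ) ?_
  filter_upwards [hray.eventually hgf] with c hc
  rw [hfx, hgx, sub_zero, sub_zero, ← smul_sub, norm_smul, norm_smul, mul_left_comm]
  gcongr

theorem det_mul_det_pos_of_norm_sub_apply_lt {A B : E →L[ℝ] E}
    (hAB : ∀ v ≠ 0, ‖B v - A v‖ < ‖A v‖) : 0 < A.det * B.det := by
  have hne (t : ℝ) (ht : t ∈ Icc 0 1) : (A + t • (B - A)).det ≠ 0 := fun hdet ↦ by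
    obtain ⟨v, hv, hv0⟩ := Submodule.exists_mem_ne_zero_of_ne_bot
      (LinearMap.bot_lt_ker_of_det_eq_zero hdet).ne'
    refine (hAB v hv0).not_ge ?_
    calc ‖A v‖ = ‖t • (B v - A v)‖ := by
          rw [← norm_neg (t • _)]
          exact congrArg norm (eq_neg_of_add_eq_zero_left hv)
      _ ≤ ‖B v - A v‖ := by
          rw [norm_smul, Real.norm_of_nonneg ht.1]
          exact mul_le_of_le_one_left (norm_nonneg _) ht.2
  have hA : A.det ≠ 0 := by simpa using hne 0 (by simp)
  by_contra! hle
  have hcont : Continuous fun t : ℝ ↦ A.det * (A + t • (B - A)).det :=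
    continuous_const.mul (ContinuousLinearMap.continuous_det.comp (by fun_prop))
  obtain ⟨t, ht, ht0⟩ := intermediate_value_Icc' zero_le_one hcont.continuousOn
    (show (0 : ℝ) ∈ Icc _ _ by simpa [hle] using mul_self_nonneg A.det)
  exact mul_ne_zero hA (hne t ht) ht0

theorem isLittleO_apply_sub_sub_of_antilipschitz {f : E → F} {f' : E →L[ℝ] F} {x : E}
    (hf : HasFDerivAt f f' x) (hf' : ∃ C, AntilipschitzWith C f') (hfx : f x = 0) :
    (fun y ↦ f' (y - x) - f y) =o[𝓝 x] f := by
  obtain ⟨C, hC⟩ := hf'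
  have hbound := (hf.isTheta_sub (hC.isUniformInducing f'.uniformContinuous).isInducing).2
  simpa [hfx] using (hf.isLittleO.trans_isBigO hbound).neg_left

theorem exists_contDiff_norm_sub_le [FiniteDimensional ℝ E] {f : E → F} {f' : E → E →L[ℝ] F}
    (hf : Continuous f)
    (hf' : ∀ x, f x = 0 → HasFDerivAt f (f' x) x ∧ ∃ C, AntilipschitzWith C (f' x))
    {κ : ℝ} (hκ : 0 < κ) : ∃ g : E → F, ContDiff ℝ 1 g ∧ ∀ y, ‖g y - f y‖ ≤ κ * ‖f y‖ := by
  suffices hloc : ∀ x, ∃ V ∈ 𝓝 x, ∃ g : E → F, ContDiff ℝ 1 g ∧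
      ∀ y ∈ V, g y ∈ closedBall (f y) (κ * ‖f y‖) by
    obtain ⟨g, hg⟩ := exists_contMDiffMap_forall_mem_convex_of_local (n := 1)
      (modelWithCornersSelf ℝ E) (fun y ↦ convex_closedBall (f y) (κ * ‖f y‖)) fun x ↦ by
        obtain ⟨V, hV, g, hg, hgV⟩ := hloc x
        exact ⟨V, hV, g, hg.contMDiff.contMDiffOn, hgV⟩
    exact ⟨g, g.contMDiff.contDiff, fun y ↦ mem_closedBall_iff_norm.1 (hg y)⟩
  intro x
  simp only [mem_closedBall_iff_norm]
  by_cases hx : f x = 0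
  · obtain ⟨hderiv, hantilip⟩ := hf' x hx
    exact ⟨_, (isLittleO_apply_sub_sub_of_antilipschitz hderiv hantilip hx).bound hκ,
      fun y ↦ f' x (y - x), by fun_prop, fun y hy ↦ hy⟩
  · have hnear : ∀ᶠ y in 𝓝 x, ‖f x - f y‖ < κ * ‖f y‖ :=
      ContinuousAt.eventually_lt (by fun_prop) (by fun_prop) (by simp [hκ, hx])
    exact ⟨_, hnear, fun _ ↦ f x, contDiff_const, fun y hy ↦ hy.le⟩

theorem isLittleO_add_symm_sub_sub {f : E → F} {e : E ≃L[ℝ] F} {x : E}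
    (hf : HasFDerivAt f (e : E →L[ℝ] F) x) :
    (fun y ↦ x + e.symm (f y - f x) - y) =o[𝓝 x] fun y ↦ y - x := by
  refine (((e.symm : F →L[ℝ] E).isBigO_comp _ _).trans_isLittleO hf.isLittleO).congr_left
    fun y ↦ ?_
  rw [ContinuousLinearEquiv.coe_coe, map_sub, ContinuousLinearEquiv.coe_coe, e.symm_apply_apply]
  abel

end Approximation

section LocalDegree

variable {E : Type*} [NormedAddCommGroup E] [NormedSpace ℝ E] [FiniteDimensional ℝ E]
  {h : E → E} {h' : E → E →L[ℝ] E}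

theorem exists_antilipschitzWith_of_det_ne_zero {A : E →L[ℝ] E} (hA : A.det ≠ 0) :
    ∃ C, AntilipschitzWith C A :=
  ⟨_, (A.toContinuousLinearEquivOfDetNeZero hA).antilipschitz⟩

theorem exists_hasCompactSupport_norm_add_sub_le {f : E → E} {K : Set E} (hK : IsCompact K)
    (hfK : ∀ x ∉ K, f x = x) {g : E → E} (hg : ContDiff ℝ 1 g) :
    ∃ u : E → E, ContDiff ℝ 1 u ∧ HasCompactSupport u ∧
      ∀ x, ‖x + u x - f x‖ ≤ ‖g x - f x‖ := by
  obtain ⟨R, hR, hKR⟩ := hK.isBounded.subset_closedBall_lt 0 0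
  let χ : ContDiffBump (0 : E) := ⟨R, R + 1, hR, lt_add_one R⟩
  refine ⟨fun x ↦ χ x • (g x - x), χ.contDiff.smul (hg.sub contDiff_id),
    χ.hasCompactSupport.smul_right, fun x ↦ ?_⟩
  by_cases hx : x ∈ K
  · simp [χ.one_of_mem_closedBall (hKR hx)]
  · rw [hfK x hx, add_sub_cancel_left, norm_smul, Real.norm_of_nonneg χ.nonneg]
    exact mul_le_of_le_one_left (norm_nonneg _) χ.le_one

theorem exists_eq_and_det_pos_of_eq_self_off_compact {K : Set E} (hK : IsCompact K)
    (hh : Continuous h) (hhK : ∀ x ∉ K, h x = x) {z : E}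
    (hz : ∀ x, h x = z → HasFDerivAt h (h' x) x ∧ (h' x).det ≠ 0) :
    ∃ x, h x = z ∧ 0 < (h' x).det := by
  obtain ⟨g, hg, hgh⟩ := exists_contDiff_norm_sub_le (f := fun x ↦ h x - z) (f' := h')
    (by fun_prop) (fun x hx ↦ ⟨(hz x (sub_eq_zero.1 hx)).1.sub_const z,
      exists_antilipschitzWith_of_det_ne_zero (hz x (sub_eq_zero.1 hx)).2⟩) one_half_pos
  obtain ⟨u, hu, hu_supp, huh⟩ :=
    exists_hasCompactSupport_norm_add_sub_le hK hhK (hg.add (contDiff_const (c := z)))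
  have hclose (x : E) : ‖x + u x - z - (h x - z)‖ ≤ 1 / 2 * ‖h x - z‖ := by
    rw [sub_sub_sub_cancel_right]
    exact (huh x).trans (by simpa only [sub_sub_eq_add_sub] using hgh x)
  obtain ⟨x, hx, hdet⟩ := exists_add_eq_and_det_nonneg hu hu_supp z
  have hhx : h x = z := by
    have hle := hclose x
    rw [hx, sub_self, zero_sub, norm_neg] at hle
    exact sub_eq_zero.1 (norm_le_zero_iff.1 (by linarith))
  obtain ⟨hderiv, hdet_ne⟩ := hz x hhx
  have hderiv_u : HasFDerivAt (fun x ↦ x + u x - z) (1 + fderiv ℝ u x) x :=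
    ((hasFDerivAt_id x).add (hu.differentiable one_ne_zero x).hasFDerivAt).sub_const z
  have hderiv_close := norm_sub_apply_le_of_eventually_norm_sub_le (hderiv.sub_const z) hderiv_u
    (sub_eq_zero.2 hhx) (.of_forall hclose)
  refine ⟨x, hhx, pos_of_mul_pos_left (det_mul_det_pos_of_norm_sub_apply_lt fun v hv ↦ ?_) hdet⟩
  have hv' : 0 < ‖h' x v‖ := norm_pos_iff.2 fun h0 ↦ by
    obtain ⟨C, hC⟩ := exists_antilipschitzWith_of_det_ne_zero hdet_ne
    exact hv (hC.injective (h0.trans (map_zero _).symm))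
  linarith [hderiv_close v]

theorem exists_det_pos_of_norm_sub_lt {c : E} {r : ℝ} (hr : 0 < r)
    (hh : ∀ y ∈ closedBall c r, HasFDerivAt h (h' y) y)
    (hdet : ∀ y ∈ closedBall c r, (h' y).det ≠ 0)
    (hid : ∀ y ∈ closedBall c r, ‖h y - y‖ < r / 2) :
    ∃ y ∈ closedBall c r, 0 < (h' y).det := by
  let χ : ContDiffBump c := ⟨r / 2, r, half_pos hr, half_lt_self hr⟩
  let G : E → E := fun y ↦ y + χ y • (h y - y)
  have hG_cont : Continuous G := by
    refine continuous_id.add (continuous_of_tsupport fun y hy ↦ ?_)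
    have hy' : y ∈ closedBall c r := χ.tsupport_eq ▸ tsupport_smul_subset_left _ _ hy
    exact χ.continuous.continuousAt.smul ((hh y hy').continuousAt.sub continuousAt_id)
  have hG_off (y : E) (hy : y ∉ closedBall c r) : G y = y := by
    simp [G, χ.zero_of_le_dist (not_le.1 hy).le]
  have hG_fiber (y : E) (hy : G y = c) : y ∈ ball c (r / 2) := by
    by_cases hyr : y ∈ closedBall c r
    · calc dist y c = dist y (G y) := by rw [hy]
        _ = ‖χ y • (h y - y)‖ := dist_self_add_right _ _
        _ ≤ ‖h y - y‖ := by
            rw [norm_smul, Real.norm_of_nonneg χ.nonneg]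
            exact mul_le_of_le_one_left (norm_nonneg _) χ.le_one
        _ < r / 2 := hid y hyr
    · rw [← hG_off y hyr, hy]
      exact mem_ball_self (half_pos hr)
  have hball : ball c (r / 2) ⊆ closedBall c r :=
    ball_subset_closedBall.trans (closedBall_subset_closedBall (half_le_self hr.le))
  have hG_deriv (y : E) (hy : y ∈ ball c (r / 2)) : HasFDerivAt G (h' y) y := by
    refine (hh y (hball hy)).congr_of_eventuallyEq ?_
    filter_upwards [χ.eventuallyEq_one_of_mem_ball hy] with x hx
    simp [G, hx]
  obtain ⟨y, hy, hpos⟩ := exists_eq_and_det_pos_of_eq_self_off_compact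
    (isCompact_closedBall c r) hG_cont hG_off fun y hy ↦
      ⟨hG_deriv y (hG_fiber y hy), hdet y (hball (hG_fiber y hy))⟩
  exact ⟨y, hball (hG_fiber y hy), hpos⟩

theorem eventually_forall_closedBall_exists_det_mul_det_pos {x : E} {L : E →L[ℝ] E}
    (hx : HasFDerivAt h L x) (hL : L.det ≠ 0) :
    ∀ᶠ ρ : ℝ in 𝓝[>] 0, ∀ c, dist c x ≤ 2 * ρ →
      (∀ y ∈ closedBall c ρ, HasFDerivAt h (h' y) y) → (∀ y ∈ closedBall c ρ, (h' y).det ≠ 0) →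
      ∃ y ∈ closedBall c ρ, 0 < L.det * (h' y).det := by
  let e : E ≃L[ℝ] E := L.toContinuousLinearEquivOfDetNeZero hL
  have hdet_symm : (e.symm : E →L[ℝ] E).det = L.det⁻¹ := by
    simp [e, ContinuousLinearEquiv.det_coe_symm]
  obtain ⟨ε, hε, hclose⟩ := Metric.eventually_nhds_iff_ball.1
    ((isLittleO_add_symm_sub_sub (e := e) hx).bound (show (0 : ℝ) < 1 / 7 by norm_num))
  filter_upwards [Ioo_mem_nhdsGT (show 0 < ε / 3 by positivity)] with ρ ⟨hρ, hρε⟩ c hc hderiv hdet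
  have hdist (y : E) (hy : y ∈ closedBall c ρ) : dist y x ≤ 3 * ρ := by
    linarith [dist_triangle y c x, mem_closedBall.1 hy]
  have hconj_deriv (y : E) (hy : y ∈ closedBall c ρ) :
      HasFDerivAt (fun y ↦ x + e.symm (h y - h x)) ((e.symm : E →L[ℝ] E) ∘L h' y) y :=
    ((e.symm : E →L[ℝ] E).hasFDerivAt.comp y ((hderiv y hy).sub_const (h x))).const_add x
  have hdet_comp (y : E) : ((e.symm : E →L[ℝ] E) ∘L h' y).det = L.det⁻¹ * (h' y).det :=
    (LinearMap.det_comp _ _).trans (congrArg (· * (h' y).det) hdet_symm)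
  obtain ⟨y, hy, hpos⟩ := exists_det_pos_of_norm_sub_lt hρ hconj_deriv
    (fun y hy ↦ by
      rw [hdet_comp]
      exact mul_ne_zero (inv_ne_zero hL) (hdet y hy))
    (fun y hy ↦ by
      have hbound := hclose y (mem_ball.2 (by linarith [hdist y hy]))
      rw [← dist_eq_norm y x] at hbound
      linarith [hdist y hy])
  refine ⟨y, hy, ?_⟩
  calc 0 < L.det ^ 2 * ((e.symm : E →L[ℝ] E) ∘L h' y).det := by positivity
    _ = L.det * (h' y).det := by
      rw [hdet_comp]
      field_simp

theorem exists_mem_ball_det_mul_det_pos {w x : E} {r : ℝ} (hr : 0 < r) (hwx : dist w x = r)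
    (hx : HasFDerivAt h (h' x) x) (hdet_x : (h' x).det ≠ 0)
    (hh : ∀ y ∈ ball w r, HasFDerivAt h (h' y) y) (hdet : ∀ y ∈ ball w r, (h' y).det ≠ 0) :
    ∃ y ∈ ball w r, 0 < (h' x).det * (h' y).det := by
  obtain ⟨ρ, hball, hρ, hρr⟩ :=
    ((eventually_forall_closedBall_exists_det_mul_det_pos (h' := h') hx hdet_x).and
      (Ioo_mem_nhdsGT (half_pos hr))).exists
  let c : E := AffineMap.lineMap x w (2 * ρ / r)
  have hcx : dist c x = 2 * ρ := by
    rw [dist_lineMap_left, dist_comm x w, hwx, Real.norm_of_nonneg (by positivity),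
      div_mul_cancel₀ _ hr.ne']
  have hcw : dist c w = r - 2 * ρ := by
    rw [dist_lineMap_right, dist_comm x w, hwx, Real.norm_of_nonneg
      (sub_nonneg.2 ((div_le_one hr).2 (by linarith))), sub_mul, one_mul, div_mul_cancel₀ _ hr.ne']
  have hsub : closedBall c ρ ⊆ ball w r := closedBall_subset_ball' (by linarith)
  obtain ⟨y, hy, hpos⟩ := hball c hcx.le (fun y hy ↦ hh y (hsub hy)) fun y hy ↦ hdet y (hsub hy)
  exact ⟨y, hsub hy, hpos⟩

end LocalDegree

section DifferenceQuotient

variable {ι E F : Type*} [Finite ι] [NormedAddCommGroup E] [NormedSpace ℝ E]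
  [NormedAddCommGroup F] [NormedSpace ℝ F] {f : E → F} {f' : E → E →L[ℝ] F}

/-- The linear map whose value at each basis vector `b i` is the difference quotient of `f` at `x`
in the direction `b i` with step `1 / c`. -/
noncomputable def differenceQuotient (b : Module.Basis ι ℝ E) (f : E → F) (c : ℝ) (x : E) :
    E →L[ℝ] F :=
  b.constrL fun i ↦ c • (f (x + c⁻¹ • b i) - f x)

theorem continuous_constrL (b : Module.Basis ι ℝ E) :
    Continuous (b.constrL : (ι → F) → E →L[ℝ] F) := by
  have := Fintype.ofFinite ι
  have := b.finiteDimensional_of_finite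
  refine continuous_clm_apply.2 fun v ↦ ?_
  simp only [Module.Basis.constrL_apply]
  fun_prop

theorem tendsto_differenceQuotient (b : Module.Basis ι ℝ E) {x : E}
    (hf : HasFDerivAt f (f' x) x) :
    Tendsto (fun c ↦ differenceQuotient b f c x) atTop (𝓝 (f' x)) := by
  have hlim : b.constrL (fun i ↦ f' x (b i)) = f' x :=
    ContinuousLinearMap.coe_injective (b.ext fun i ↦ b.constrL_basis _ i)
  rw [← hlim]
  exact (continuous_constrL b).continuousAt.tendsto.comp
    (tendsto_pi_nhds.2 fun i ↦ hf.lim_real (b i))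

theorem exists_mem_nhds_eventually_continuousOn_differenceQuotient (b : Module.Basis ι ℝ E) {p : E}
    (hf : ∀ᶠ x in 𝓝 p, ContinuousAt f x) :
    ∃ V ∈ 𝓝 p, ∀ᶠ c in atTop, ContinuousOn (differenceQuotient b f c) V := by
  have hshift (i : ι) : ∀ᶠ q : E × ℝ in 𝓝 p ×ˢ 𝓝 0, ContinuousAt f (q.1 + q.2 • b i) := by
    rw [← nhds_prod_eq]
    exact (Continuous.tendsto' (by fun_prop) _ _ (by simp)).eventually hf
  have hshift' := (eventually_all.2 hshift).and (hf.prod_inl (𝓝 (0 : ℝ)))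
  obtain ⟨V, hV, T, hT, hVT⟩ := eventually_prod_iff.1 hshift'
  refine ⟨{x | V x}, hV, ?_⟩
  filter_upwards [tendsto_inv_atTop_zero.eventually hT] with c hc x hx
  obtain ⟨hcont_shift, hcont⟩ := hVT hx hc
  refine ContinuousAt.continuousWithinAt
    ((continuous_constrL b).continuousAt.comp (continuousAt_pi.2 fun i ↦ ?_))
  exact ((ContinuousAt.comp (f := fun x ↦ x + c⁻¹ • b i) (hcont_shift i) (by fun_prop)).sub
    hcont).const_smul c

theorem exists_seq_continuousOn_tendsto_fderiv [FiniteDimensional ℝ E] {p : E}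
    (hf : ∀ᶠ x in 𝓝 p, HasFDerivAt f (f' x) x) :
    ∃ V ∈ 𝓝 p, ∃ Q : ℕ → E → E →L[ℝ] F, (∀ m, ContinuousOn (Q m) V) ∧
      ∀ x ∈ V, Tendsto (Q · x) atTop (𝓝 (f' x)) := by
  let b := Module.finBasis ℝ E
  obtain ⟨V, hV, hcont⟩ := exists_mem_nhds_eventually_continuousOn_differenceQuotient b
    (hf.mono fun x hx ↦ hx.continuousAt)
  obtain ⟨c₀, hc₀⟩ := eventually_atTop.1 hcont
  refine ⟨V ∩ {x | HasFDerivAt f (f' x) x}, inter_mem hV hf,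
    fun m ↦ differenceQuotient b f (c₀ + m), fun m ↦ ?_, fun x hx ↦ ?_⟩
  · exact (hc₀ _ (by simp)).mono inter_subset_left
  · exact (tendsto_differenceQuotient b hx.2).comp
      (tendsto_atTop_add_const_left _ c₀ tendsto_natCast_atTop_atTop)

end DifferenceQuotient

section Sign

theorem exists_eventually_mul_pos_of_tendsto {X : Type*} [TopologicalSpace X] [BaireSpace X]
    [Nonempty X] {d : ℕ → X → ℝ} {D : X → ℝ} (hd : ∀ m, Continuous (d m))
    (hlim : ∀ x, Tendsto (d · x) atTop (𝓝 (D x))) (hD : ∀ x, D x ≠ 0) :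
    ∃ p, ∀ᶠ x in 𝓝 p, 0 < D p * D x := by
  let P (k : ℕ) : Set X := {x | ∀ m ≥ k, 0 ≤ d m x}
  let N (k : ℕ) : Set X := {x | ∀ m ≥ k, d m x ≤ 0}
  have hP_closed (k : ℕ) : IsClosed (P k) := by
    simp only [P, ofPred_forall]
    exact isClosed_biInter fun m _ ↦ isClosed_le continuous_const (hd m)
  have hN_closed (k : ℕ) : IsClosed (N k) := by
    simp only [N, ofPred_forall]
    exact isClosed_biInter fun m _ ↦ isClosed_le (hd m) continuous_const
  have hP_pos {k : ℕ} {x : X} (hx : x ∈ P k) : 0 < D x :=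
    (ge_of_tendsto (hlim x) (eventually_atTop.2 ⟨k, hx⟩)).lt_of_ne' (hD x)
  have hN_neg {k : ℕ} {x : X} (hx : x ∈ N k) : D x < 0 :=
    (le_of_tendsto (hlim x) (eventually_atTop.2 ⟨k, hx⟩)).lt_of_ne (hD x)
  have hcover : ⋃ i, Sum.elim P N i = univ := eq_univ_of_forall fun x ↦ by
    rcases (hD x).lt_or_gt with hx | hx
    · obtain ⟨k, hk⟩ := eventually_atTop.1 ((hlim x).eventually_lt_const hx)
      exact mem_iUnion.2 ⟨.inr k, fun m hm ↦ (hk m hm).le⟩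
    · obtain ⟨k, hk⟩ := eventually_atTop.1 ((hlim x).eventually_const_lt hx)
      exact mem_iUnion.2 ⟨.inl k, fun m hm ↦ (hk m hm).le⟩
  obtain ⟨i, p, hp⟩ := nonempty_interior_of_iUnion_of_closed (Sum.rec hP_closed hN_closed) hcover
  refine ⟨p, eventually_of_mem (mem_interior_iff_mem_nhds.1 hp) fun x hx ↦ ?_⟩
  rcases i with k | k
  · exact mul_pos (hP_pos (interior_subset hp)) (hP_pos hx)
  · exact mul_pos_of_neg_of_neg (hN_neg (interior_subset hp)) (hN_neg hx)

theorem inter_frontier_nonempty_of_isPreconnected {X : Type*} [TopologicalSpace X] {s A : Set X}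
    (hs : IsPreconnected s) (hA : (s ∩ A).Nonempty) (hAc : (s \ A).Nonempty) :
    (s ∩ frontier A).Nonempty := by
  have : PreconnectedSpace s := Subtype.preconnectedSpace hs
  obtain ⟨a, has, haA⟩ := hA
  obtain ⟨b, hbs, hbA⟩ := hAc
  obtain ⟨x, hx⟩ : (frontier (Subtype.val ⁻¹' A : Set s)).Nonempty :=
    nonempty_frontier_iff.2 ⟨⟨⟨a, has⟩, haA⟩, fun h ↦ hbA (h.ge (mem_univ (⟨b, hbs⟩ : s)))⟩
  exact ⟨x, x.2, continuous_subtype_val.frontier_preimage_subset A hx⟩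

theorem mul_pos_of_disjoint_frontier {X : Type*} [TopologicalSpace X] {s : Set X} {D : X → ℝ}
    (hs : IsPreconnected s) (hfr : Disjoint s (frontier {x | 0 < D x})) (hD : ∀ x ∈ s, D x ≠ 0)
    {x y : X} (hx : x ∈ s) (hy : y ∈ s) : 0 < D x * D y := by
  have hsame {a b : X} (ha : a ∈ s) (hb : b ∈ s) (hDa : 0 < D a) : 0 < D b := by
    by_contra hDb
    exact not_disjoint_iff_nonempty_inter.2
      (inter_frontier_nonempty_of_isPreconnected hs ⟨a, ha, hDa⟩ ⟨b, hb, hDb⟩) hfr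
  rcases (hD x hx).lt_or_gt with hDx | hDx
  · exact mul_pos_of_neg_of_neg hDx <| (hD y hy).lt_of_le <| not_lt.1 fun hDy ↦
      hDx.not_gt (hsame hy hx hDy)
  · exact mul_pos hDx (hsame hx hy hDx)

theorem frequently_mul_neg_of_mem_frontier {X : Type*} [TopologicalSpace X] {D : X → ℝ} {p : X}
    (hp : p ∈ frontier {x | 0 < D x}) (hD : ∀ᶠ x in 𝓝 p, D x ≠ 0) :
    ∃ᶠ x in 𝓝 p, D p * D x < 0 := by
  rw [frontier_eq_closure_inter_closure, mem_inter_iff, mem_closure_iff_frequently,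
    mem_closure_iff_frequently] at hp
  rcases hD.self_of_nhds.lt_or_gt with hDp | hDp
  · exact hp.1.mono fun x hx ↦ mul_neg_of_neg_of_pos hDp hx
  · exact (hp.2.and_eventually hD).mono fun x ⟨hx, hDx⟩ ↦
      mul_neg_of_pos_of_neg hDp (hDx.lt_of_le (not_lt.1 hx))

end Sign

section Darboux

variable {E : Type*} [NormedAddCommGroup E] [NormedSpace ℝ E] [FiniteDimensional ℝ E]
  {h : E → E} {h' : E → E →L[ℝ] E} {U : Set E}

theorem exists_eventually_nhdsWithin_det_mul_det_pos {S : Set E} (hS : IsClosed S) {p₀ : E}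
    (hp₀ : p₀ ∈ S) (hU : IsOpen U) (hp₀U : p₀ ∈ U) (hh : ∀ x ∈ U, HasFDerivAt h (h' x) x)
    (hdet : ∀ x ∈ U, (h' x).det ≠ 0) :
    ∃ p ∈ S ∩ U, ∀ᶠ x in 𝓝[S] p, 0 < (h' p).det * (h' x).det := by
  obtain ⟨V, hV, Q, hQ_cont, hQ_lim⟩ :=
    exists_seq_continuousOn_tendsto_fderiv (f' := h') (eventually_of_mem (hU.mem_nhds hp₀U) hh)
  obtain ⟨W, hWV, hW, hp₀W⟩ := _root_.mem_nhds_iff.1 (inter_mem hV (hU.mem_nhds hp₀U))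
  have : LocallyCompactSpace ↑(S ∩ W) :=
    (hS.isLocallyClosed.inter hW.isLocallyClosed).locallyCompactSpace
  have : Nonempty ↑(S ∩ W) := ⟨p₀, hp₀, hp₀W⟩
  have hdet_cont : Continuous (ContinuousLinearMap.det : (E →L[ℝ] E) → ℝ) :=
    ContinuousLinearMap.continuous_det
  obtain ⟨p, hp⟩ := exists_eventually_mul_pos_of_tendsto
    (d := fun m (x : ↑(S ∩ W)) ↦ (Q m x).det) (D := fun x ↦ (h' x).det)
    (fun m ↦ hdet_cont.comp
      ((hQ_cont m).comp_continuous continuous_subtype_val fun x ↦ (hWV x.2.2).1))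
    (fun x ↦ (hdet_cont.tendsto _).comp (hQ_lim x (hWV x.2.2).1))
    (fun x ↦ hdet x (hWV x.2.2).2)
  refine ⟨p, ⟨p.2.1, (hWV p.2.2).2⟩, ?_⟩
  have hp' := (eventually_nhds_subtype_iff _ p fun x ↦ 0 < (h' p).det * (h' x).det).1 hp
  rwa [nhdsWithin_inter_of_mem' (mem_nhdsWithin_of_mem_nhds (hW.mem_nhds p.2.2))] at hp'

theorem frequently_nhdsWithin_frontier_det_mul_det_nonpos (hU : IsOpen U)
    (hh : ∀ x ∈ U, HasFDerivAt h (h' x) x) (hdet : ∀ x ∈ U, (h' x).det ≠ 0) {p : E} (hpU : p ∈ U)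
    (hp : p ∈ frontier {x | 0 < (h' x).det}) :
    ∃ᶠ x in 𝓝[frontier {x | 0 < (h' x).det}] p, (h' p).det * (h' x).det ≤ 0 := by
  intro hpos
  simp only [not_le] at hpos
  obtain ⟨ε, hε, hεU⟩ := Metric.nhds_basis_ball.eventually_iff.1
    ((hU.eventually_mem hpU).and (eventually_nhdsWithin_iff.1 hpos))
  obtain ⟨w, hpw, hwε⟩ := ((frequently_mul_neg_of_mem_frontier hp
    (eventually_of_mem (hU.mem_nhds hpU) hdet)).and_eventually
      (ball_mem_nhds p (half_pos hε))).exists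
  obtain ⟨x, hxA, hwx⟩ := isClosed_frontier.exists_infDist_eq_dist ⟨p, hp⟩ w
  have hwx_le : dist w x < ε / 2 :=
    (hwx ▸ infDist_le_dist_of_mem hp).trans_lt hwε
  have hball : ball w (dist w x) ⊆ ball p ε :=
    ball_subset_ball' (by linarith [mem_ball.1 hwε])
  have hxε : x ∈ ball p ε := by
    rw [mem_ball]
    linarith [dist_triangle_left x p w, mem_ball.1 hwε]
  have hpx : 0 < (h' p).det * (h' x).det := (hεU hxε).2 hxA
  have hwx_pos : 0 < dist w x := dist_pos.2 fun h ↦ hpw.not_gt (h ▸ hpx)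
  obtain ⟨y, hy, hxy⟩ := exists_mem_ball_det_mul_det_pos hwx_pos rfl (hh x (hεU hxε).1)
    (hdet x (hεU hxε).1) (fun y hy ↦ hh y (hεU (hball hy)).1) fun y hy ↦ hdet y (hεU (hball hy)).1
  have hwy : 0 < (h' w).det * (h' y).det :=
    mul_pos_of_disjoint_frontier (D := fun x ↦ (h' x).det) (convex_ball w _).isPreconnected
      (hwx ▸ disjoint_ball_infDist) (fun y hy ↦ hdet y (hεU (hball hy)).1)
      (mem_ball_self hwx_pos) hy
  have hneg : (h' p).det * (h' w).det *
      ((h' p).det * (h' x).det * ((h' x).det * (h' y).det) * ((h' w).det * (h' y).det)) < 0 :=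
    mul_neg_of_neg_of_pos hpw (mul_pos (mul_pos hpx hxy) hwy)
  linarith [sq_nonneg ((h' p).det * (h' w).det * (h' x).det * (h' y).det)]

theorem darboux_pair_general (hU : IsOpen U) (hU_conn : IsPreconnected U)
    (hh : ∀ x ∈ U, HasFDerivAt h (h' x) x) {x₀ x₁ : E} (hx₀ : x₀ ∈ U) (hx₁ : x₁ ∈ U)
    (h₀ : (h' x₀).det < 0) (h₁ : 0 < (h' x₁).det) : ∃ x ∈ U, (h' x).det = 0 := by
  by_contra! hdet
  obtain ⟨p₀, hp₀U, hp₀⟩ := inter_frontier_nonempty_of_isPreconnected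
    (A := {x | 0 < (h' x).det}) hU_conn ⟨x₁, hx₁, h₁⟩ ⟨x₀, hx₀, h₀.not_gt⟩
  obtain ⟨p, ⟨hp, hpU⟩, hpos⟩ :=
    exists_eventually_nhdsWithin_det_mul_det_pos isClosed_frontier hp₀ hU hp₀U hh hdet
  exact frequently_nhdsWithin_frontier_det_mul_det_nonpos hU hh hdet hpU hp
    (hpos.mono fun _ hx ↦ hx.not_ge)

end Darboux

/-- Darboux-type theorem for a pair of differentiable maps: if
`det (f' x₀ - α • g' x₀) < 0` and `det (f' x₁ - α • g' x₁) > 0` then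
`det (f' x₂ - α • g' x₂) = 0` for some `x₂ ∈ U`. -/
theorem darboux_pair
    {n : ℕ} {U : Set (EuclideanSpace ℝ (Fin n))} (hU : IsOpen U) (hUconn : IsConnected U)
    (f g : EuclideanSpace ℝ (Fin n) → EuclideanSpace ℝ (Fin n))
    (f' g' : EuclideanSpace ℝ (Fin n) → EuclideanSpace ℝ (Fin n) →L[ℝ] EuclideanSpace ℝ (Fin n))
    (hf : ∀ x ∈ U, HasFDerivAt f (f' x) x)
    (hg : ∀ x ∈ U, HasFDerivAt g (g' x) x)
    (α : ℝ) (x₀ x₁ : EuclideanSpace ℝ (Fin n)) (hx₀ : x₀ ∈ U) (hx₁ : x₁ ∈ U)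
    (h₀ : (f' x₀ - α • g' x₀).det < 0)
    (h₁ : (f' x₁ - α • g' x₁).det > 0) :
    ∃ x₂ ∈ U, (f' x₂ - α • g' x₂).det = 0 :=
  darboux_pair_general hU hUconn.isPreconnected
    (fun x hx ↦ (hf x hx).sub ((hg x hx).const_smul α)) hx₀ hx₁ h₀ h₁
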